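/- (Theorem 1(iii), divisibility) Let φ be a nonzero linear functional on ⊗^Lℂ^N with φ∘T(x) = Λ(x)·φ for all x ∈ ℂ, and for l ∈ ℤ let Q⁺_l ∈ ℂ[x] be the polynomial with Q⁺_l(x) = φ(|x⟩⁺_l) wherever |x⟩⁺_l is defined. Then for every integer m with 0 ≤ m ≤ M, both Q⁺_m(x) and Q⁺_{N−m}(x) are divisible in ℂ[x] by x^m·∏_{j=0}^{L−1}(1 − x^Nc*_j^N). -/

import Mathlib

/-!
The divisibility holds for the vector `|x⟩⁺_l` itself, component by component, and passes to
`Q⁺_l` by linearity of `φ`.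

With `y = x c_j`, the factors of `|x,2n⟩ f^e(x,2n)` telescope: its component `k` is
`q^{Σ k_j²} ∏_j G(y_j, n + k_j)` where `G(y,s) = ∏_{i=1}^{s} (1 - yω⁻ⁱ)/(1 - yωⁱ)`. As `ω^N = 1`,
`G` is `N`-periodic in `s` and `G(y,s) = G(y, 2M - s)`, so `(yω;ω)_M G(y,s)` is a polynomial, `site`.
The factor `u(qx)` is `∏_j (1 - y_j^N) (y_jω;ω)_M`, so `∏_j (1 - y_j^N)` splits off with polynomial
quotient. Because `q = ω^{M+1}`, the odd vectors behave in the same way with `s` shifted by `M + 1`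
(`site_even`, `site_odd`, `ketp_eq`).

What remains is to see that `X^m` divides `V_l = Σ_n ω^{ln} F n`, `F n = ∏_j site_j (n + k_j)`, for
`l ≡ ±m` modulo `N`. The functional equation of `G` gives `F (n+1) D(ωⁿX) = F n E(ω⁻ⁿX)` with
`D(0) = E(0) = 1`. Summing against `ω^{ln}` expresses `(ω⁻ˡ - 1) V_l` through the
`X^r V_{l±r}` with `r ≥ 1`, and by induction on `t`, `X^t ∣ V_l` whenever `l` is at distance at
least `t` from `Nℤ` (`X_pow_dvd_fourier`). Since `2m < N`, this applies to `l = m` and `l = N - m`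
with `t = m`.
-/

open Matrix Polynomial

noncomputable section

/-- The operator `Z` on `ℂ^N`: `(Zv)_k = ω^k v_k`. -/
def Zop (N : ℕ) (ω : ℂ) : Matrix (ZMod N) (ZMod N) ℂ :=
  Matrix.diagonal fun k => ω ^ k.val

/-- The operator `X` on `ℂ^N`: `(Xv)_k = v_{k-1}`. -/
def Xop (N : ℕ) : Matrix (ZMod N) (ZMod N) ℂ :=
  Matrix.of fun k k' => if k' = k - 1 then 1 else 0

/-- The operator `Y := Z * X` on `ℂ^N`. -/
def Yop (N : ℕ) [NeZero N] (ω : ℂ) : Matrix (ZMod N) (ZMod N) ℂ :=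
  Zop N ω * Xop N

/-- The `L`-operator `L_h(x)`, a 2×2 matrix of operators on `ℂ^N`, for
`h = (a,b,c,d) ∈ ℂ⁴`: first row `(aY, xbX)`, second row `(xcZ, d·I)`. -/
def Lop (N : ℕ) [NeZero N] (ω : ℂ) (h : ℂ × ℂ × ℂ × ℂ) (x : ℂ) :
    Matrix (Fin 2) (Fin 2) (Matrix (ZMod N) (ZMod N) ℂ) :=
  Matrix.of
    ![![h.1 • Yop N ω, (x * h.2.1) • Xop N],
      ![(x * h.2.2.1) • Zop N ω, h.2.2.2 • (1 : Matrix (ZMod N) (ZMod N) ℂ)]]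

/-- Embedding of an operator on `ℂ^N` as an operator on `⊗^L ℂ^N` acting on the `j`-th
tensor slot. -/
def emb (N L : ℕ) [NeZero N] [NeZero L] (j : ZMod L) (A : Matrix (ZMod N) (ZMod N) ℂ) :
    Matrix (ZMod L → ZMod N) (ZMod L → ZMod N) ℂ :=
  Matrix.of fun k k' =>
    A (k j) (k' j) * ∏ i ∈ Finset.univ.erase j, (if k i = k' i then (1 : ℂ) else 0)

/-- The monodromy matrix `L_{h⃗}(x) = L_{h₀}(x) ⋯ L_{h_{L-1}}(x)`, a 2×2 matrix of
operators on `⊗^L ℂ^N`, the operator entries of the `j`-th factor acting on the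
`j`-th tensor slot. -/
def mono (N L : ℕ) [NeZero N] [NeZero L] (ω : ℂ) (h : ZMod L → ℂ × ℂ × ℂ × ℂ) (x : ℂ) :
    Matrix (Fin 2) (Fin 2) (Matrix (ZMod L → ZMod N) (ZMod L → ZMod N) ℂ) :=
  ((List.finRange L).map fun j =>
    (Lop N ω (h ((j : ℕ) : ZMod L)) x).map (emb N L ((j : ℕ) : ZMod L))).prod

/-- The transfer matrix `T_{h⃗}(x)`: the trace of the monodromy matrix over the 2×2
auxiliary indices. -/
def transfer (N L : ℕ) [NeZero N] [NeZero L] (ω : ℂ) (h : ZMod L → ℂ × ℂ × ℂ × ℂ)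
    (x : ℂ) : Matrix (ZMod L → ZMod N) (ZMod L → ZMod N) ℂ :=
  mono N L ω h x 0 0 + mono N L ω h x 1 1

/-- The q-shifted factorial `(a; s)_n = (1−a)(1−as)⋯(1−as^{n−1})`. -/
def qsf (a s : ℂ) (n : ℕ) : ℂ :=
  ∏ i ∈ Finset.range n, (1 - a * s ^ i)

/-- The vector `|x,l⟩ ∈ ⊗^Lℂ^N` with components
`⟨k₀,…,k_{L−1}|x,l⟩ = q^{Σk_j²} ∏_j (xc*_jq^{−l−2};ω⁻¹)_{k_j}/(xc*_jq^{l+2};ω)_{k_j}`. -/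
def ket (N L : ℕ) [NeZero L] (ω q : ℂ) (cstar : ZMod L → ℂ) (x : ℂ) (l : ℤ) :
    (ZMod L → ZMod N) → ℂ :=
  fun k => q ^ (∑ j : ZMod L, ((k j).val) ^ 2) *
    ∏ j : ZMod L,
      qsf (x * cstar j * q ^ (-l - 2)) ω⁻¹ ((k j).val) /
        qsf (x * cstar j * q ^ (l + 2)) ω ((k j).val)

/-- All denominators occurring in the components of `|x,l⟩` are nonzero. -/
def ketDefined (N L : ℕ) [NeZero L] (ω q : ℂ) (cstar : ZMod L → ℂ) (x : ℂ) (l : ℤ) :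
    Prop :=
  ∀ (j : ZMod L) (n : ℕ), n < N → qsf (x * cstar j * q ^ (l + 2)) ω n ≠ 0

/-- `f^e(x,2n) = ∏_j (xc*_j;ω⁻¹)_{n+1}/(xc*_j;ω)_{n+1}`. -/
def fe (L : ℕ) [NeZero L] (ω : ℂ) (cstar : ZMod L → ℂ) (x : ℂ) (n : ℕ) : ℂ :=
  ∏ j : ZMod L, qsf (x * cstar j) ω⁻¹ (n + 1) / qsf (x * cstar j) ω (n + 1)

/-- `f^o(x,2n+1) = ∏_j (xc*_jq⁻¹;ω⁻¹)_{n+1}/(xc*_jq;ω)_{n+1}`. -/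
def fo (L : ℕ) [NeZero L] (ω q : ℂ) (cstar : ZMod L → ℂ) (x : ℂ) (n : ℕ) : ℂ :=
  ∏ j : ZMod L, qsf (x * cstar j * q⁻¹) ω⁻¹ (n + 1) / qsf (x * cstar j * q) ω (n + 1)

/-- `|x⟩ᵉ_l = Σ_{n=0}^{N−1} |x,2n⟩ f^e(x,2n) ω^{ln}`. -/
def kete (N L : ℕ) [NeZero L] (ω q : ℂ) (cstar : ZMod L → ℂ) (x : ℂ) (l : ℤ) :
    (ZMod L → ZMod N) → ℂ :=
  ∑ n ∈ Finset.range N,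
    (fe L ω cstar x n * ω ^ (l * (n : ℤ))) • ket N L ω q cstar x (2 * (n : ℤ))

/-- `|x⟩ᵒ_l = Σ_{n=0}^{N−1} |x,2n+1⟩ f^o(x,2n+1) ω^{ln}`. -/
def keto (N L : ℕ) [NeZero L] (ω q : ℂ) (cstar : ZMod L → ℂ) (x : ℂ) (l : ℤ) :
    (ZMod L → ZMod N) → ℂ :=
  ∑ n ∈ Finset.range N,
    (fo L ω q cstar x n * ω ^ (l * (n : ℤ))) • ket N L ω q cstar x (2 * (n : ℤ) + 1)

/-- `u(x) = ∏_j (1−x^Nc*_j^N)(xc*_jq;q²)_M`. -/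
def uu (N M L : ℕ) [NeZero L] (q : ℂ) (cstar : ZMod L → ℂ) (x : ℂ) : ℂ :=
  ∏ j : ZMod L, (1 - x ^ N * cstar j ^ N) * qsf (x * cstar j * q) (q ^ 2) M

/-- `|x⟩⁺_l = |x⟩ᵉ_l q^{−l} u(qx) + |x⟩ᵒ_l u(x)`. -/
def ketp (N M L : ℕ) [NeZero L] (ω q : ℂ) (cstar : ZMod L → ℂ) (x : ℂ) (l : ℤ) :
    (ZMod L → ZMod N) → ℂ :=
  (q ^ (-l) * uu N M L q cstar (q * x)) • kete N L ω q cstar x l +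
    uu N M L q cstar x • keto N L ω q cstar x l

/-- All the q-shifted-factorial denominators occurring in `|x⟩ᵉ_l`, `|x⟩ᵒ_l`
(hence in `|x⟩⁺_l`) are nonzero. -/
def allDef (N L : ℕ) [NeZero L] (ω q : ℂ) (cstar : ZMod L → ℂ) (x : ℂ) : Prop :=
  (∀ n : ℕ, n < N → ketDefined N L ω q cstar x (2 * (n : ℤ)) ∧
      ketDefined N L ω q cstar x (2 * (n : ℤ) + 1)) ∧
  ∀ (j : ZMod L) (n : ℕ), n < N →
    qsf (x * cstar j) ω (n + 1) ≠ 0 ∧ qsf (x * cstar j * q) ω (n + 1) ≠ 0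

/-! ### Fourier sums of solutions of a first-order difference equation -/

/-- If `F (n+1) · D(ωⁿX) = F n · E(ω⁻ⁿX)` with `D(0) = E(0) = 1` and `F` is `N`-periodic, then the
Fourier sum `V l = Σ ω^{ln} F n` satisfies `(ω⁻ˡ - 1) V l = Σ_{r ≥ 1} X^r (⋯)`, the brackets being
combinations of `V (l+r)` and `V (l-r)`. Hence by induction `X^t ∣ V l` as soon as `l` is at
distance at least `t` from `Nℤ`. -/
lemma X_pow_dvd_fourier (N : ℕ) (ω : ℂ) (hω : IsPrimitiveRoot ω N) (hN : N ≠ 0)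
    (F : ℕ → ℂ[X]) (hF : F N = F 0) (R : ℕ) (d e : ℕ → ℂ) (hd : d 0 = 1) (he : e 0 = 1)
    (hrec : ∀ n, F (n + 1) * ∑ r ∈ Finset.range (R + 1), C (d r * ω ^ ((r : ℤ) * n)) * X ^ r =
      F n * ∑ r ∈ Finset.range (R + 1), C (e r * ω ^ (-(r : ℤ) * n)) * X ^ r)
    (t : ℕ) : ∀ l : ℤ, (∀ i : ℤ, |i| < t → ¬ (N : ℤ) ∣ l + i) →
      X ^ t ∣ ∑ n ∈ Finset.range N, C (ω ^ (l * (n : ℤ))) * F n := by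
  have hω0 : ω ≠ 0 := hω.ne_zero hN
  set V : ℤ → ℂ[X] := fun l => ∑ n ∈ Finset.range N, C (ω ^ (l * (n : ℤ))) * F n with hV
  have hshift : ∀ l : ℤ, ∑ n ∈ Finset.range N, C (ω ^ (l * (n : ℤ))) * F (n + 1) =
      C (ω ^ (-l)) * V l := by
    intro l
    have h1 : ∑ n ∈ Finset.range N, C (ω ^ (l * ((n + 1 : ℕ) : ℤ))) * F (n + 1) = V l := by
      have h2 := Finset.sum_range_succ (fun n : ℕ => C (ω ^ (l * (n : ℤ))) * F n) N
      rw [Finset.sum_range_succ'] at h2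
      have h3 : ω ^ (l * (N : ℤ)) = 1 := by
        rw [mul_comm, _root_.zpow_mul, zpow_natCast, hω.pow_eq_one, _root_.one_zpow]
      simp only [h3, hF, Nat.cast_zero, mul_zero, zpow_zero] at h2
      exact add_right_cancel h2
    rw [← h1, Finset.mul_sum]
    refine Finset.sum_congr rfl fun n _ => ?_
    rw [← mul_assoc, ← C_mul, ← zpow_add₀ hω0]
    congr 3
    push_cast
    ring
  have hsum : ∀ l : ℤ,
      ∑ r ∈ Finset.range (R + 1), C (d r * ω ^ (-(l + r))) * X ^ r * V (l + r) =
      ∑ r ∈ Finset.range (R + 1), C (e r) * X ^ r * V (l - r) := by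
    intro l
    have h := Finset.sum_congr (rfl : Finset.range N = Finset.range N)
      (fun n _ => congrArg (fun p => C (ω ^ (l * (n : ℤ))) * p) (hrec n))
    simp only [Finset.mul_sum] at h
    rw [Finset.sum_comm] at h
    rw [Finset.sum_comm (s := Finset.range N)] at h
    calc _ = _ := ?_
      _ = _ := h
      _ = _ := ?_
    · refine Finset.sum_congr rfl fun r _ => ?_
      rw [C_mul, mul_right_comm, mul_assoc (C (d r)), ← hshift, Finset.mul_sum, Finset.sum_mul]
      refine Finset.sum_congr rfl fun n _ => ?_
      rw [add_mul, zpow_add₀ hω0, C_mul, C_mul]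
      ring
    · refine Finset.sum_congr rfl fun r _ => ?_
      rw [hV, Finset.mul_sum]
      refine Finset.sum_congr rfl fun n _ => ?_
      rw [sub_eq_add_neg, add_mul, zpow_add₀ hω0, C_mul, C_mul]
      ring
  induction t using Nat.strong_induction_on with
  | _ t ih =>
    intro l hl
    rcases Nat.eq_zero_or_pos t with rfl | ht
    · simp
    have h := hsum l
    rw [Finset.sum_range_succ', Finset.sum_range_succ'] at h
    simp only [hd, he, Nat.cast_zero, add_zero, sub_zero, pow_zero, mul_one, one_mul, C_1] at h
    have hkey : ∀ r : ℕ, ∀ l' : ℤ, |l' - l| = ((r + 1 : ℕ) : ℤ) → X ^ t ∣ X ^ (r + 1) * V l' := by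
      intro r l' hl'
      by_cases hr : r + 1 < t
      · have h1 := ih (t - (r + 1)) (by omega) l' (by
          intro i hi hdvd
          refine hl (i + (l' - l)) ?_ ?_
          · refine lt_of_le_of_lt (abs_add_le _ _) ?_
            omega
          · convert hdvd using 1
            ring)
        have h2 := mul_dvd_mul_left (X ^ (r + 1) : ℂ[X]) h1
        rwa [← pow_add, Nat.add_sub_cancel' hr.le] at h2
      · exact Dvd.dvd.mul_right (pow_dvd_pow _ (by omega)) _
    have hne : ω ^ (-l) - 1 ≠ 0 := by
      intro h0
      have h1 := (hω.zpow_eq_one_iff_dvd (-l)).1 (sub_eq_zero.1 h0)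
      exact hl 0 (by simpa using ht) (by simpa using h1)
    have h3 : C (ω ^ (-l) - 1) * V l =
        ∑ r ∈ Finset.range R, C (e (r + 1)) * X ^ (r + 1) * V (l - ((r + 1 : ℕ) : ℤ)) -
        ∑ r ∈ Finset.range R, C (d (r + 1) * ω ^ (-(l + ((r + 1 : ℕ) : ℤ)))) * X ^ (r + 1) *
          V (l + ((r + 1 : ℕ) : ℤ)) := by
      rw [C_sub, C_1]
      linear_combination h
    have h4 : X ^ t ∣ C (ω ^ (-l) - 1) * V l := by
      rw [h3]
      refine dvd_sub (Finset.dvd_sum fun r _ => ?_) (Finset.dvd_sum fun r _ => ?_)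
      · rw [mul_assoc]
        refine Dvd.dvd.mul_left (hkey r _ ?_) _
        rw [show l - ((r + 1 : ℕ) : ℤ) - l = -((r + 1 : ℕ) : ℤ) by ring, abs_neg, Nat.abs_cast]
      · rw [mul_assoc]
        refine Dvd.dvd.mul_left (hkey r _ ?_) _
        rw [add_sub_cancel_left, Nat.abs_cast]
    exact ((isUnit_C.2 (isUnit_iff_ne_zero.2 hne)).dvd_mul_left).1 h4

/-! ### The polynomial attached to one site -/

/-- `∏_{i=1}^{a} (1 - c ω⁻ⁱ X) ∏_{i=a+1}^{M} (1 - c ωⁱ X)`. -/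
def halfSite (M : ℕ) (ω c : ℂ) (a : ℕ) : ℂ[X] :=
  (∏ i ∈ Finset.range a, (1 - C (c * ω⁻¹ ^ (i + 1)) * X)) *
    ∏ i ∈ Finset.Ico a M, (1 - C (c * ω ^ (i + 1)) * X)

/-- The polynomial `(yω;ω)_M · ∏_{i=1}^{s} (1 - yω⁻ⁱ)/(1 - yωⁱ)` in `X`, where `y = cX`, after
cancellation. For `s ≤ M` it is `halfSite M ω c s`; it is `(2M+1)`-periodic in `s` and invariant
under `s ↦ 2M - s`, which gives the definition. -/
def site (M : ℕ) (ω c : ℂ) (s : ℕ) : ℂ[X] :=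
  halfSite M ω c (min (s % (2 * M + 1)) (2 * M - s % (2 * M + 1)))

lemma halfSite_succ (M : ℕ) (ω c : ℂ) (a : ℕ) (ha : a < M) :
    halfSite M ω c (a + 1) * (1 - C (c * ω ^ (a + 1)) * X) =
      halfSite M ω c a * (1 - C (c * ω⁻¹ ^ (a + 1)) * X) := by
  unfold halfSite
  rw [Finset.prod_range_succ, Finset.prod_eq_prod_Ico_succ_bot ha]
  ring

lemma site_periodic (M : ℕ) (ω c : ℂ) (s : ℕ) : site M ω c (s + (2 * M + 1)) = site M ω c s := by
  simp [site]

/-- The difference equation satisfied by the site polynomials. -/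
lemma site_succ (M : ℕ) (ω c : ℂ) (hω : ω ^ (2 * M + 1) = 1) (s : ℕ) :
    site M ω c (s + 1) * (1 - C (c * ω ^ (s + 1)) * X) =
      site M ω c s * (1 - C (c * ω⁻¹ ^ (s + 1)) * X) := by
  have hω0 : ω ≠ 0 := by
    rintro rfl
    simp at hω
  have hω' : ω⁻¹ ^ (2 * M + 1) = 1 := by rw [inv_pow, hω, inv_one]
  have hr : s % (2 * M + 1) < 2 * M + 1 := Nat.mod_lt _ (by omega)
  have hpow : ω ^ (s + 1) = ω ^ (s % (2 * M + 1) + 1) := by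
    rw [pow_succ, pow_succ, pow_eq_pow_mod s hω]
  have hpow' : ω⁻¹ ^ (s + 1) = ω⁻¹ ^ (s % (2 * M + 1) + 1) := by
    rw [pow_succ, pow_succ, pow_eq_pow_mod s hω']
  have hmod : (s + 1) % (2 * M + 1) = (s % (2 * M + 1) + 1) % (2 * M + 1) := by
    rw [Nat.mod_add_mod]
  unfold site
  rw [hpow, hpow', hmod]
  generalize s % (2 * M + 1) = r at hr
  rcases lt_or_ge r M with h | h
  · rw [Nat.mod_eq_of_lt (by omega), min_eq_left (by omega), min_eq_left (by omega)]
    exact halfSite_succ M ω c r h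
  rcases lt_or_ge r (2 * M) with h2 | h2
  · obtain ⟨a, ha⟩ : ∃ a, 2 * M = r + a + 1 := ⟨2 * M - r - 1, by omega⟩
    -- past the middle, the equation is the one for `a = 2M - r - 1` with `ω`, `ω⁻¹` exchanged
    have e1 : ω ^ (r + 1) = ω⁻¹ ^ (a + 1) := by
      rw [inv_pow]
      refine eq_inv_of_mul_eq_one_left ?_
      rw [← pow_add, ← hω]
      congr 1
      omega
    have e2 : ω⁻¹ ^ (r + 1) = ω ^ (a + 1) := by
      rw [inv_pow, inv_eq_iff_eq_inv, ← inv_pow, e1]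
    rw [Nat.mod_eq_of_lt (by omega), min_eq_right (by omega), min_eq_right (by omega), e1, e2,
      show 2 * M - (r + 1) = a by omega, show 2 * M - r = a + 1 by omega]
    exact (halfSite_succ M ω c a (by omega)).symm
  · obtain rfl : r = 2 * M := by omega
    rw [hω, hω']
    simp

lemma qsf_add (a s : ℂ) (m n : ℕ) : qsf a s (m + n) = qsf a s m * qsf (a * s ^ m) s n := by
  unfold qsf
  rw [Finset.prod_range_add]
  simp only [pow_add, mul_assoc]

lemma qsf_succ (a s : ℂ) (n : ℕ) : qsf a s (n + 1) = qsf a s n * (1 - a * s ^ n) := by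
  unfold qsf
  rw [Finset.prod_range_succ]

/-- Closed form of the site polynomial, in the normalization of the even vectors. -/
lemma site_even (M : ℕ) (ω c x : ℂ) (hω : ω ^ (2 * M + 1) = 1) (s : ℕ) :
    qsf (x * c) ω (s + 1) * (site M ω c s).eval x =
      qsf (x * c * ω) ω M * qsf (x * c) ω⁻¹ (s + 1) := by
  induction s with
  | zero =>
    have h0 : (site M ω c 0).eval x = qsf (x * c * ω) ω M := by
      simp only [site, halfSite, qsf, Nat.zero_mod, zero_le, inf_of_le_left,
        Finset.prod_range_zero, one_mul, Nat.Ico_zero_eq_range, eval_prod, eval_sub, eval_one,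
        eval_mul, eval_C, eval_X]
      refine Finset.prod_congr rfl fun i _ => ?_
      ring
    rw [h0, zero_add, mul_comm]
    simp [qsf]
  | succ s ih =>
    have h := congrArg (eval x) (site_succ M ω c hω s)
    simp only [eval_sub, eval_one, eval_mul, eval_C, eval_X] at h
    rw [qsf_succ _ _ (s + 1), qsf_succ _ ω⁻¹ (s + 1)]
    linear_combination qsf (x * c) ω (s + 1) * h + (1 - x * c * ω⁻¹ ^ (s + 1)) * ih

/-- Closed form of the site polynomial, in the normalization of the odd vectors: since
`q = ω^{M+1}`, passing from even to odd amounts to a shift by `M + 1`. -/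
lemma site_odd (M : ℕ) (ω q c x : ℂ) (hω : ω ^ (2 * M + 1) = 1) (hq : q = ω ^ (M + 1)) (s : ℕ) :
    qsf (x * c * q) ω (s + 1) * (site M ω c (s + (M + 1))).eval x =
      qsf (x * c * q) ω M * qsf (x * c * q⁻¹) ω⁻¹ (s + 1) := by
  have hω0 : ω ≠ 0 := by
    rintro rfl
    simp at hω
  induction s with
  | zero =>
    have h := congrArg (eval x) (site_succ M ω c hω M)
    simp only [eval_sub, eval_one, eval_mul, eval_C, eval_X] at h
    have hM : (site M ω c M).eval x = qsf (x * c * q) ω M := by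
      have h1 : site M ω c M = halfSite M ω c M := by
        unfold site
        rw [Nat.mod_eq_of_lt (by omega), min_eq_left (by omega)]
      rw [h1, halfSite, qsf, ← Finset.prod_range_reflect]
      simp only [Finset.Ico_self, Finset.prod_empty, mul_one, eval_prod, eval_sub, eval_one,
        eval_mul, eval_C, eval_X]
      refine Finset.prod_congr rfl fun i hi => ?_
      have hi' := Finset.mem_range.1 hi
      have e : ω⁻¹ ^ (M - 1 - i + 1) = q * ω ^ i := by
        rw [hq, inv_pow]
        refine inv_eq_of_mul_eq_one_right ?_
        rw [← pow_add, ← pow_add, ← hω]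
        congr 1
        omega
      rw [e]
      ring
    rw [hM] at h
    rw [← hq, inv_pow, ← hq] at h
    have h1 : ∀ a s : ℂ, qsf a s (0 + 1) = 1 - a := by
      intro a s
      simp [qsf]
    rw [h1, h1, zero_add]
    linear_combination h
  | succ s ih =>
    have h := congrArg (eval x) (site_succ M ω c hω (s + (M + 1)))
    simp only [eval_sub, eval_one, eval_mul, eval_C, eval_X] at h
    have e : ∀ a : ℂ, a ^ (s + (M + 1) + 1) = a ^ (M + 1) * a ^ (s + 1) := by
      intro a
      rw [← pow_add]
      congr 1
      omega
    rw [e, e, inv_pow _ (M + 1), ← hq] at h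
    rw [qsf_succ _ _ (s + 1), qsf_succ _ ω⁻¹ (s + 1),
      show s + 1 + (M + 1) = s + (M + 1) + 1 by omega]
    linear_combination qsf (x * c * q) ω (s + 1) * h +
      (1 - x * c * q⁻¹ * ω⁻¹ ^ (s + 1)) * ih

/-! ### The Fourier sums of products of site polynomials -/

/-- `Σ_{n<N} ω^{ln} ∏_j site_j(n + k_j)`: up to explicit factors, the component `k` of the even
vector of index `l`; the odd vector is obtained from `k_j + M + 1`. -/
def fourierSite (M L : ℕ) [NeZero L] (ω : ℂ) (c : ZMod L → ℂ) (l : ℤ) (k : ZMod L → ℕ) : ℂ[X] :=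
  ∑ n ∈ Finset.range (2 * M + 1), C (ω ^ (l * (n : ℤ))) * ∏ j, site M ω (c j) (n + k j)

/-- Expansion in powers of `X` of a product of linear factors with `X` rescaled by `b`. -/
lemma prod_linear_scale {ι : Type*} [Fintype ι] (a : ι → ℂ) (b : ℂ) :
    ∏ j, (1 - C (a j * b) * X) = ∑ r ∈ Finset.range (Fintype.card ι + 1),
      C ((∏ j, (1 - C (a j) * X)).coeff r * b ^ r) * X ^ r := by
  have hdeg : (∏ j, (1 - C (a j) * X)).natDegree < Fintype.card ι + 1 := by
    refine Nat.lt_succ_of_le ((natDegree_prod_le _ _).trans ?_)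
    refine (Finset.sum_le_card_nsmul _ _ 1 fun j _ => ?_).trans (by simp)
    compute_degree
  have h1 : ∏ j, (1 - C (a j * b) * X) = (∏ j, (1 - C (a j) * X)).comp (C b * X) := by
    rw [prod_comp]
    refine Finset.prod_congr rfl fun j _ => ?_
    simp [mul_assoc]
  rw [h1]
  conv_lhs => rw [as_sum_range_C_mul_X_pow' _ hdeg]
  simp only [Polynomial.sum_comp, mul_comp, C_comp, X_pow_comp, mul_pow, ← C_pow, C_mul, mul_assoc]

lemma X_pow_dvd_fourierSite (M L : ℕ) [NeZero L] (ω : ℂ) (hω : IsPrimitiveRoot ω (2 * M + 1))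
    (c : ZMod L → ℂ) (m : ℕ) (l : ℤ) (k : ZMod L → ℕ)
    (hl : ∀ i : ℤ, |i| < m → ¬ ((2 * M + 1 : ℕ) : ℤ) ∣ l + i) :
    X ^ m ∣ fourierSite M L ω c l k := by
  have hω0 : ω ≠ 0 := hω.ne_zero (by omega)
  refine X_pow_dvd_fourier (2 * M + 1) ω hω (by omega) (fun n => ∏ j, site M ω (c j) (n + k j)) ?_
    (Fintype.card (ZMod L)) (fun r => (∏ j, (1 - C (c j * ω ^ (k j + 1)) * X)).coeff r)
    (fun r => (∏ j, (1 - C (c j * ω⁻¹ ^ (k j + 1)) * X)).coeff r) ?_ ?_ ?_ m l hl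
  · refine Finset.prod_congr rfl fun j _ => ?_
    rw [add_comm, site_periodic, zero_add]
  · simp [coeff_zero_eq_eval_zero, eval_prod]
  · simp [coeff_zero_eq_eval_zero, eval_prod]
  · intro n
    have e1 : ∀ r : ℕ, ω ^ ((r : ℤ) * n) = (ω ^ n) ^ r := by
      intro r
      rw [← pow_mul, mul_comm n r]
      exact_mod_cast rfl
    have e2 : ∀ r : ℕ, ω ^ (-(r : ℤ) * n) = (ω⁻¹ ^ n) ^ r := by
      intro r
      rw [neg_mul, _root_.zpow_neg, e1, inv_pow, inv_pow]
    simp only [e1, e2]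
    rw [← prod_linear_scale, ← prod_linear_scale, ← Finset.prod_mul_distrib,
      ← Finset.prod_mul_distrib]
    refine Finset.prod_congr rfl fun j _ => ?_
    have h := site_succ M ω (c j) hω.pow_eq_one (n + k j)
    rw [show n + 1 + k j = n + k j + 1 by omega, mul_assoc (c j), mul_assoc (c j), ← pow_add,
      ← pow_add, show k j + 1 + n = n + k j + 1 by omega]
    exact h

/-! ### The components of `|x⟩⁺_l` -/

/-- The polynomial whose product with `∏_j (1 - x^N c_j^N)` is the component `k` of `|x⟩⁺_l`. -/
def ketPoly (M L : ℕ) [NeZero L] (ω q : ℂ) (c : ZMod L → ℂ) (l : ℤ)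
    (k : ZMod L → ZMod (2 * M + 1)) : ℂ[X] :=
  C (q ^ (∑ j : ZMod L, ((k j).val) ^ 2)) *
    (C (q ^ (-l)) * fourierSite M L ω c l (fun j => (k j).val) +
      fourierSite M L ω c l (fun j => (k j).val + (M + 1)))

lemma ketp_eq (M L : ℕ) [NeZero L] (ω q : ℂ) (hω : IsPrimitiveRoot ω (2 * M + 1))
    (hq : q = ω ^ (M + 1)) (c : ZMod L → ℂ) (x : ℂ) (l : ℤ)
    (hx : allDef (2 * M + 1) L ω q c x) (k : ZMod L → ZMod (2 * M + 1)) :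
    ketp (2 * M + 1) M L ω q c x l k =
      (∏ j, (1 - x ^ (2 * M + 1) * c j ^ (2 * M + 1))) * (ketPoly M L ω q c l k).eval x := by
  have hω0 : ω ≠ 0 := hω.ne_zero (by omega)
  have hω1 := hω.pow_eq_one
  have hq0 : q ≠ 0 := hq ▸ pow_ne_zero _ hω0
  have hq2 : q ^ 2 = ω := by
    rw [hq, ← pow_mul, show (M + 1) * 2 = 2 * M + 1 + 1 by ring, pow_succ, hω1, one_mul]
  have hqN : q ^ (2 * M + 1) = 1 := by
    rw [hq, ← pow_mul, mul_comm, pow_mul, hω1, one_pow]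
  have z1 : ∀ n : ℕ, q ^ (2 * (n : ℤ) + 2) = ω ^ (n + 1) := by
    intro n
    rw [← hq2, ← pow_mul, ← zpow_natCast]
    congr 1
  have z2 : ∀ n : ℕ, q ^ (-(2 * (n : ℤ)) - 2) = ω⁻¹ ^ (n + 1) := by
    intro n
    rw [inv_pow, ← z1, ← _root_.zpow_neg]
    congr 1
    ring
  have z3 : ∀ n : ℕ, q ^ (2 * (n : ℤ) + 1 + 2) = q * ω ^ (n + 1) := by
    intro n
    rw [← z1, ← zpow_one_add₀ hq0]
    congr 1
    ring
  have z4 : ∀ n : ℕ, q ^ (-(2 * (n : ℤ) + 1) - 2) = q⁻¹ * ω⁻¹ ^ (n + 1) := by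
    intro n
    rw [inv_pow, ← mul_inv, ← z3, ← _root_.zpow_neg]
    congr 1
  have hval : ∀ j, (k j).val < 2 * M + 1 := fun j => ZMod.val_lt _
  have heven : ∀ n < 2 * M + 1, uu (2 * M + 1) M L q c (q * x) *
      (fe L ω c x n * ket (2 * M + 1) L ω q c x (2 * (n : ℤ)) k) =
      (∏ j, (1 - x ^ (2 * M + 1) * c j ^ (2 * M + 1))) *
        (q ^ (∑ j : ZMod L, ((k j).val) ^ 2) *
          ∏ j, (site M ω (c j) (n + (k j).val)).eval x) := by
    intro n hn
    unfold uu fe ket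
    rw [mul_left_comm (∏ j, _ / _), mul_left_comm, mul_left_comm (∏ j, _) (q ^ _)]
    congr 1
    simp only [← Finset.prod_mul_distrib]
    refine Finset.prod_congr rfl fun j _ => ?_
    have n1 := (hx.2 j n hn).1
    have n2 := (hx.1 n hn).1 j (k j).val (hval j)
    rw [z1] at n2
    rw [z1, z2, mul_pow, hqN, one_mul, hq2, show q * x * c j * q = x * c j * ω by rw [← hq2]; ring]
    have hs : (site M ω (c j) (n + (k j).val)).eval x = qsf (x * c j * ω) ω M *
        (qsf (x * c j) ω⁻¹ (n + 1) / qsf (x * c j) ω (n + 1) *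
          (qsf (x * c j * ω⁻¹ ^ (n + 1)) ω⁻¹ (k j).val /
            qsf (x * c j * ω ^ (n + 1)) ω (k j).val)) := by
      have h := site_even M ω (c j) x hω1 (n + (k j).val)
      rw [show n + (k j).val + 1 = n + 1 + (k j).val by omega, qsf_add _ _ (n + 1),
        qsf_add _ _ (n + 1)] at h
      rw [div_mul_div_comm, ← mul_div_assoc, eq_div_iff (mul_ne_zero n1 n2)]
      linear_combination h
    rw [hs]
    ring
  have hodd : ∀ n < 2 * M + 1, uu (2 * M + 1) M L q c x *
      (fo L ω q c x n * ket (2 * M + 1) L ω q c x (2 * (n : ℤ) + 1) k) =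
      (∏ j, (1 - x ^ (2 * M + 1) * c j ^ (2 * M + 1))) *
        (q ^ (∑ j : ZMod L, ((k j).val) ^ 2) *
          ∏ j, (site M ω (c j) (n + ((k j).val + (M + 1)))).eval x) := by
    intro n hn
    unfold uu fo ket
    rw [mul_left_comm (∏ j, _ / _), mul_left_comm, mul_left_comm (∏ j, _) (q ^ _)]
    congr 1
    simp only [← Finset.prod_mul_distrib]
    refine Finset.prod_congr rfl fun j _ => ?_
    have n1 := (hx.2 j n hn).2
    have n2 := (hx.1 n hn).2 j (k j).val (hval j)
    rw [z3, ← mul_assoc] at n2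
    rw [z3, z4, hq2, ← mul_assoc (x * c j) q⁻¹, ← mul_assoc (x * c j) q]
    have hs : (site M ω (c j) (n + ((k j).val + (M + 1)))).eval x = qsf (x * c j * q) ω M *
        (qsf (x * c j * q⁻¹) ω⁻¹ (n + 1) / qsf (x * c j * q) ω (n + 1) *
          (qsf (x * c j * q⁻¹ * ω⁻¹ ^ (n + 1)) ω⁻¹ (k j).val /
            qsf (x * c j * q * ω ^ (n + 1)) ω (k j).val)) := by
      have h := site_odd M ω q (c j) x hω1 hq (n + (k j).val)
      rw [show n + (k j).val + 1 = n + 1 + (k j).val by omega, qsf_add _ _ (n + 1),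
        qsf_add _ _ (n + 1), add_assoc] at h
      rw [div_mul_div_comm, ← mul_div_assoc, eq_div_iff (mul_ne_zero n1 n2)]
      linear_combination h
    rw [hs]
    ring
  simp only [ketp, kete, keto, ketPoly, fourierSite, Pi.add_apply, Pi.smul_apply, smul_eq_mul,
    Finset.sum_apply, eval_mul, eval_add, eval_C, eval_finsetSum, eval_prod, mul_add]
  congr 1
  · simp only [Finset.mul_sum]
    refine Finset.sum_congr rfl fun n hn => ?_
    linear_combination q ^ (-l) * ω ^ (l * (n : ℤ)) * heven n (Finset.mem_range.1 hn)
  · simp only [Finset.mul_sum]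
    refine Finset.sum_congr rfl fun n hn => ?_
    linear_combination ω ^ (l * (n : ℤ)) * hodd n (Finset.mem_range.1 hn)

/-- All denominators are nonzero off the roots of `∏_j (1 - x^N c_j^N)`. -/
lemma allDef_of_ne (M L : ℕ) [NeZero L] (ω q : ℂ) (hω : ω ^ (2 * M + 1) = 1)
    (hq : q = ω ^ (M + 1)) (c : ZMod L → ℂ) (x : ℂ)
    (hx : ∀ j, 1 - x ^ (2 * M + 1) * c j ^ (2 * M + 1) ≠ 0) :
    allDef (2 * M + 1) L ω q c x := by
  have hqN : q ^ (2 * M + 1) = 1 := by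
    rw [hq, ← pow_mul, mul_comm, pow_mul, hω, one_pow]
  have key : ∀ (j : ZMod L) (b : ℂ) (n : ℕ), b ^ (2 * M + 1) = 1 →
      qsf (x * c j * b) ω n ≠ 0 := by
    intro j b n hb
    unfold qsf
    refine Finset.prod_ne_zero_iff.2 fun i _ h0 => hx j ?_
    have h1 : x * c j * b * ω ^ i = 1 := (sub_eq_zero.1 h0).symm
    have h2 := congrArg (· ^ (2 * M + 1)) h1
    simp only [mul_pow, hb, ← pow_mul, one_pow, mul_one] at h2
    rw [mul_comm i, pow_mul, hω, one_pow, mul_one] at h2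
    rw [h2, sub_self]
  have hz : ∀ a : ℤ, (q ^ a) ^ (2 * M + 1) = 1 := by
    intro a
    rw [← zpow_natCast, zpow_comm, zpow_natCast, hqN, _root_.one_zpow]
  refine ⟨fun n _ => ⟨fun j i _ => key j _ i (hz _), fun j i _ => key j _ i (hz _)⟩,
    fun j n _ => ⟨?_, key j q _ hqN⟩⟩
  simpa using key j 1 (n + 1) (one_pow _)

/-- Divisibility for an arbitrary index `l` at distance at least `m` from `Nℤ`. -/
lemma dvd_of_interpolates (M L : ℕ) [NeZero L] (ω q : ℂ) (hω : IsPrimitiveRoot ω (2 * M + 1))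
    (hq : q = ω ^ (M + 1)) (c : ZMod L → ℂ)
    (φ : ((ZMod L → ZMod (2 * M + 1)) → ℂ) →ₗ[ℂ] ℂ) (m : ℕ) (l : ℤ)
    (hl : ∀ i : ℤ, |i| < m → ¬ ((2 * M + 1 : ℕ) : ℤ) ∣ l + i) (Q : ℂ[X])
    (hQ : ∀ x : ℂ, allDef (2 * M + 1) L ω q c x →
      Q.eval x = φ (ketp (2 * M + 1) M L ω q c x l)) :
    (X ^ m * ∏ j : ZMod L, (1 - C (c j ^ (2 * M + 1)) * X ^ (2 * M + 1))) ∣ Q := by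
  set P : ℂ[X] := ∏ j : ZMod L, (1 - C (c j ^ (2 * M + 1)) * X ^ (2 * M + 1)) with hP
  have hPe : ∀ x, P.eval x = ∏ j, (1 - x ^ (2 * M + 1) * c j ^ (2 * M + 1)) := by
    intro x
    simp [hP, eval_prod, mul_comm]
  set S : ℂ[X] := ∑ k, C (φ (fun i => if k = i then 1 else 0)) * ketPoly M L ω q c l k with hS
  have hP0 : P ≠ 0 := by
    intro h0
    have h := hPe 0
    simp [h0] at h
  -- both sides agree off the roots of `P`, hence `P * Q = P * (P * S)`
  have hQS : Q = P * S := by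
    refine mul_left_cancel₀ hP0 (Polynomial.funext fun x => ?_)
    rw [eval_mul, eval_mul]
    by_cases hx : P.eval x = 0
    · rw [hx, zero_mul, zero_mul]
    have hdef := allDef_of_ne M L ω q hω.pow_eq_one hq c x
      (fun j => Finset.prod_ne_zero_iff.1 (hPe x ▸ hx) j (Finset.mem_univ j))
    congr 1
    rw [hQ x hdef, LinearMap.pi_apply_eq_sum_univ, hS, eval_mul, eval_finsetSum, Finset.mul_sum]
    refine Finset.sum_congr rfl fun k _ => ?_
    rw [ketp_eq M L ω q hω hq c x l hdef k, hPe, eval_mul, eval_C, smul_eq_mul]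
    ring
  rw [hQS, mul_comm P S]
  refine mul_dvd_mul_right (Finset.dvd_sum fun k _ => Dvd.dvd.mul_left ?_ _) P
  exact Dvd.dvd.mul_left (dvd_add
    (Dvd.dvd.mul_left (X_pow_dvd_fourierSite M L ω hω c m l _ hl) _)
    (X_pow_dvd_fourierSite M L ω hω c m l _ hl)) _

/-- Theorem 1(iii), divisibility: for a common left eigenvector `φ` of
the normalized transfer matrices, and `0 ≤ m ≤ M`, the polynomials `Q⁺_m` and
`Q⁺_{N−m}` (interpolating `φ(|x⟩⁺_l)` for `l = m, N−m`) are divisible by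
`x^m ∏_j (1 − x^N c*_j^N)`. -/
theorem TQ_divisibility (M L : ℕ) [NeZero L] (hM : 1 ≤ M) (ω : ℂ)
    (hω : IsPrimitiveRoot ω (2 * M + 1)) (q : ℂ) (hq : q = ω ^ (M + 1))
    (cstar : ZMod L → ℂ) (hcs : ∀ j, cstar j ≠ 0)
    (φ : ((ZMod L → ZMod (2 * M + 1)) → ℂ) →ₗ[ℂ] ℂ) (hφ0 : φ ≠ 0) (Λ : ℂ → ℂ)
    (hφ : ∀ (x : ℂ) (w : (ZMod L → ZMod (2 * M + 1)) → ℂ),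
      φ ((transfer (2 * M + 1) L ω (fun j => (q⁻¹, q⁻¹ * cstar j, cstar j, 1)) x).mulVec w) =
        Λ x * φ w)
    (m : ℕ) (hm : m ≤ M) (Qm QNm : Polynomial ℂ)
    (hQm : ∀ x : ℂ, allDef (2 * M + 1) L ω q cstar x →
      Qm.eval x = φ (ketp (2 * M + 1) M L ω q cstar x (m : ℤ)))
    (hQNm : ∀ x : ℂ, allDef (2 * M + 1) L ω q cstar x →
      QNm.eval x = φ (ketp (2 * M + 1) M L ω q cstar x ((2 * M + 1 : ℕ) - (m : ℤ)))) :
    (Polynomial.X ^ m *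
        ∏ j : ZMod L,
          (1 - Polynomial.C (cstar j ^ (2 * M + 1)) * Polynomial.X ^ (2 * M + 1))) ∣ Qm ∧
    (Polynomial.X ^ m *
        ∏ j : ZMod L,
          (1 - Polynomial.C (cstar j ^ (2 * M + 1)) * Polynomial.X ^ (2 * M + 1))) ∣ QNm := by
  constructor
  · refine dvd_of_interpolates M L ω q hω hq cstar φ m m ?_ Qm hQm
    rintro i hi ⟨k, hk⟩
    rw [abs_lt] at hi
    have h1 : 0 < (2 * M + 1 : ℤ) * k := by push_cast at hk; omega
    have h2 : (2 * M + 1 : ℤ) * k < (2 * M + 1) * 1 := by push_cast at hk; omega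
    have h3 := pos_of_mul_pos_right h1 (by positivity)
    have h4 := lt_of_mul_lt_mul_left h2 (by positivity)
    omega
  · refine dvd_of_interpolates M L ω q hω hq cstar φ m _ ?_ QNm hQNm
    rintro i hi ⟨k, hk⟩
    rw [abs_lt] at hi
    have h1 : 0 < (2 * M + 1 : ℤ) * k := by push_cast at hk; omega
    have h2 : (2 * M + 1 : ℤ) * k < (2 * M + 1) * 1 := by push_cast at hk; omega
    have h3 := pos_of_mul_pos_right h1 (by positivity)
    have h4 := lt_of_mul_lt_mul_left h2 (by positivity)
    omega

end
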